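/- Let C*, L* ∈ ℝ with 1/σ² < C* ≤ L*, and define for t ∈ [0,T]: C_t := 1/( m_t²/C* + σ²(1 − m_t²) ) − 1/σ² and L_t := min{ 1/(σ²(1 − m_t²)) ; L*/m_t² } − 1/σ² (the first term interpreted as +∞ when m_t = 1); write L̄_t := L_{T−t} and C̄_t := C_{T−t}. Let N ≥ 1, h := T/N, t_k := kh. (i) If h ≤ min{ 2σ² log 2 / β(T) ; (σ²C* − 1)/( σ²C* (σ²L* + 1) L* β(T) ) ; (σ²C* − 1)/( (σ²L* − 1) L* β(T) ) }, then for every 0 ≤ k ≤ N−1: 0 < 1 + ( m̃_{t_k}²/m̃_{t_{k+1}}² ) ( ∫_{t_k}^{t_{k+1}} L̄_t (m̃_t/m̃_{t_k}) β̄(t) dt )² − 2 ( m̃_{t_k}/m̃_{t_{k+1}} ) ∫_{t_k}^{t_{k+1}} C̄_t (m̃_t/m̃_{t_k}) β̄(t) dt < 1. (ii) If moreover M ≥ 0 and h ≤ min{ 2σ² log 2 / β(T) ; (σ²C* − 1)/( σ²M + β(T) L* (σ²L* − 1) ) ; ((σ²C* − 1)/(σ²C*)) · m_T²(1 − m_T²)/(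 σ²M(1 − m_T²) + β(T) L* m_T² ) ; (σ²C* − 1) L* / ( σ²C* (σ²L* + 1) (M + β(T) L*²) ) }, then for every 0 ≤ k ≤ N−1: 0 < 1 + ½ ( m̃_{t_k}²/m̃_{t_{k+1}}² ) ( ∫_{t_k}^{t_{k+1}} L̄_t (m̃_t/m̃_{t_k}) β̄(t) dt )² − ( m̃_{t_k}/m̃_{t_{k+1}} ) ∫_{t_k}^{t_{k+1}} C̄_t (m̃_t/m̃_{t_k}) β̄(t) dt + ( m̃_{t_k}²/m̃_{t_{k+1}}² ) M h ∫_{t_k}^{t_{k+1}} (m̃_t/m̃_{t_k}) β̄(t) dt < 1. -/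

import Mathlib

open MeasureTheory Real Set
open scoped ENNReal Classical

noncomputable section

/-- `m_t = exp(−(1/(2σ²)) ∫₀^t β(s) ds)` (here `σ2 = σ²`). -/
def mcoef (σ2 : ℝ) (β : ℝ → ℝ) (t : ℝ) : ℝ :=
  Real.exp (-(1 / (2 * σ2)) * ∫ s in (0:ℝ)..t, β s)

/-- `m̃_t = exp(−(1/(2σ²)) ∫₀^t β̄(s) ds)` with `β̄(s) = β(T − s)` (here `σ2 = σ²`). -/
def mtilde (σ2 T : ℝ) (β : ℝ → ℝ) (t : ℝ) : ℝ :=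
  Real.exp (-(1 / (2 * σ2)) * ∫ s in (0:ℝ)..t, β (T - s))

/-- `C_t = 1/(m_t²/C* + σ²(1 − m_t²)) − 1/σ²` (here `σ2 = σ²`). -/
def concConst (σ2 : ℝ) (β : ℝ → ℝ) (Cstar t : ℝ) : ℝ :=
  1 / (mcoef σ2 β t ^ 2 / Cstar + σ2 * (1 - mcoef σ2 β t ^ 2)) - 1 / σ2

/-- `L_t = min{1/(σ²(1−m_t²)); L*/m_t²} − 1/σ²`, the first term of the minimum being
interpreted as `+∞` when `m_t = 1` (here `σ2 = σ²`). -/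
def lipConst (σ2 : ℝ) (β : ℝ → ℝ) (Lstar t : ℝ) : ℝ :=
  (if mcoef σ2 β t = 1 then Lstar / mcoef σ2 β t ^ 2
    else min (1 / (σ2 * (1 - mcoef σ2 β t ^ 2))) (Lstar / mcoef σ2 β t ^ 2)) - 1 / σ2

/-- The quantity
`1 + (m̃_a²/m̃_b²)(∫_a^b L̄_t (m̃_t/m̃_a) β̄(t) dt)² − 2(m̃_a/m̃_b) ∫_a^b C̄_t (m̃_t/m̃_a) β̄(t) dt`
on the discretization cell `[a, b]`. -/
def stepE1 (σ2 T : ℝ) (β L C : ℝ → ℝ) (a b : ℝ) : ℝ :=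
  1 + mtilde σ2 T β a ^ 2 / mtilde σ2 T β b ^ 2 *
      (∫ t in a..b, L (T - t) * (mtilde σ2 T β t / mtilde σ2 T β a) * β (T - t)) ^ 2 -
    2 * (mtilde σ2 T β a / mtilde σ2 T β b) *
      ∫ t in a..b, C (T - t) * (mtilde σ2 T β t / mtilde σ2 T β a) * β (T - t)

/-- The quantity
`1 + ½(m̃_a²/m̃_b²)(∫_a^b L̄_t (m̃_t/m̃_a) β̄(t) dt)² − (m̃_a/m̃_b) ∫_a^b C̄_t (m̃_t/m̃_a) β̄(t) dt
  + (m̃_a²/m̃_b²) M h ∫_a^b (m̃_t/m̃_a) β̄(t) dt` on the discretization cell `[a, b]`. -/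
def stepE2 (σ2 T : ℝ) (β L C : ℝ → ℝ) (M h a b : ℝ) : ℝ :=
  1 + 1 / 2 * (mtilde σ2 T β a ^ 2 / mtilde σ2 T β b ^ 2) *
      (∫ t in a..b, L (T - t) * (mtilde σ2 T β t / mtilde σ2 T β a) * β (T - t)) ^ 2 -
    mtilde σ2 T β a / mtilde σ2 T β b *
      (∫ t in a..b, C (T - t) * (mtilde σ2 T β t / mtilde σ2 T β a) * β (T - t)) +
    mtilde σ2 T β a ^ 2 / mtilde σ2 T β b ^ 2 * M * h *
      ∫ t in a..b, (mtilde σ2 T β t / mtilde σ2 T β a) * β (T - t)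

noncomputable def lam (l x : ℝ) : ℝ := 1 / max (1 - x) (x / l) - 1

lemma lam_case (l x : ℝ) (hl : 1 < l) (hx : 0 < x) (hx1 : x ≤ 1) :
    (x ≤ l * (1 - x) ∧ lam l x = x / (1 - x) ∧ 0 < 1 - x) ∨
      (l * (1 - x) ≤ x ∧ lam l x = (l - x) / x) := by
  have hl0 : 0 < l := by linarith
  rcases le_total x (l * (1 - x)) with h | h
  · left
    have h1 : 0 < 1 - x := by
      by_contra hc
      nlinarith
    refine ⟨h, ?_, h1⟩
    have : x / l ≤ 1 - x := by rw [div_le_iff₀ hl0]; linarith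
    rw [lam, max_eq_left this]
    field_simp; ring
  · right
    refine ⟨h, ?_⟩
    have : 1 - x ≤ x / l := by rw [le_div_iff₀ hl0]; linarith
    rw [lam, max_eq_right this]
    field_simp

lemma lam_sq_le (l x : ℝ) (hl : 1 < l) (hx : 0 < x) (hx1 : x ≤ 1) :
    lam l x ^ 2 ≤ x * (l * (l + 1)) := by
  rcases lam_case l x hl hx hx1 with ⟨h, e, h1⟩ | ⟨h, e⟩
  · rw [e, div_pow, div_le_iff₀ (by positivity)]
    have h2 : 1 ≤ (l + 1) * (1 - x) := by nlinarith
    have : x * 1 ≤ (l * (1 - x)) * ((l + 1) * (1 - x)) :=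
      mul_le_mul h h2 (by norm_num) (by nlinarith)
    nlinarith
  · rw [e, div_pow, div_le_iff₀ (by positivity)]
    have h2 : l ≤ (l + 1) * x := by nlinarith
    have h3 : l - x ≤ l * x := by nlinarith
    have h4 : (l - x) ^ 2 ≤ (l * x) ^ 2 := pow_le_pow_left₀ (by linarith) h3 2
    have h5 : l * (l * x ^ 2) ≤ ((l + 1) * x) * (l * x ^ 2) :=
      mul_le_mul_of_nonneg_right h2 (by positivity)
    nlinarith

/-- pointwise inequality without the `M` term -/
lemma ptwise1 (l q A x : ℝ) (hl : 1 < l) (hx : 0 < x) (hx1 : x ≤ 1) (hq : 0 < q) (hq1 : q < 1)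
    (hA : 0 ≤ A) (h : A * (l * (l + 1)) ≤ q) :
    2 / 3 * A * lam l x ^ 2 < x * q / (1 - x * q) := by
  have h1 : 0 < 1 - x * q := by nlinarith
  have h2 := lam_sq_le l x hl hx hx1
  have h3 : A * lam l x ^ 2 ≤ x * q := by
    calc A * lam l x ^ 2 ≤ A * (x * (l * (l + 1))) := by gcongr
      _ = x * (A * (l * (l + 1))) := by ring
      _ ≤ _ := by gcongr
  have h4 : 0 ≤ A * lam l x ^ 2 := by positivity
  rw [lt_div_iff₀ h1]
  have hxq : 0 < x * q := by positivity
  nlinarith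

set_option maxHeartbeats 1000000 in
lemma ptwise2 (l q A K μ xa x : ℝ) (hl : 1 < l) (hx1 : x ≤ 1) (hq : 0 < q)
    (hq1 : q < 1) (hA : 0 < A) (hK : 0 ≤ K) (hμ : 0 < μ) (hμ1 : μ < 1) (hμx : μ ≤ xa)
    (hxx : xa ≤ x) (hxA : x ≤ xa * (1 + 4 / 3 * A)) (hAl : A * l ≤ 1 / 4)
    (h3 : K * (1 - μ) + A * l * μ ≤ q * (μ * (1 - μ)))
    (h4 : (K + A * l ^ 2) * (l + 1) ≤ q * l) :
    2 / 3 * A * lam l x ^ 2 + K * (x / xa) < x * q / (1 - x * q) := by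
  have hxa : 0 < xa := by linarith
  have hx : 0 < x := by linarith
  have h1 : 0 < 1 - x * q := by nlinarith
  have hxq : 0 < x * q := by positivity
  have key : 2 / 3 * A * lam l x ^ 2 + K * (x / xa) ≤ x * q := by
    have hsq := lam_sq_le l x hl hx hx1
    rcases le_total xa (l * (1 - xa)) with hp | hp
    · have hxa1 : 0 < 1 - xa := by
        by_contra hc
        nlinarith
      -- concavity
      have hconc : K * (1 - xa) + A * l * xa ≤ q * (xa * (1 - xa)) := by
        set p := l / (l + 1) with hpdef
        have hl1 : 0 < l + 1 := by linarith
        have hpl : p * (l + 1) = l := by rw [hpdef]; field_simp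
        have hp' : xa ≤ p := by rw [hpdef, le_div_iff₀ hl1]; linarith
        have hfp : K * (1 - p) + A * l * p ≤ q * (p * (1 - p)) := by
          have e1 : 1 - p = 1 / (l + 1) := by rw [hpdef]; field_simp; ring
          rw [e1, hpdef]
          have : K * (1 / (l + 1)) + A * l * (l / (l + 1)) = ((K + A * l ^ 2) * (l + 1)) / (l + 1) ^ 2 := by
            field_simp
          rw [this]
          have : q * (l / (l + 1) * (1 / (l + 1))) = (q * l) / (l + 1) ^ 2 := by field_simp
          rw [this]
          gcongr
        rcases eq_or_lt_of_le (hμx.trans hp') with he | hlt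
        · have : xa = p := le_antisymm hp' (he ▸ hμx)
          rw [this]; exact hfp
        · have i1 := mul_le_mul_of_nonneg_left h3 (sub_nonneg.2 hp')
          have i2 := mul_le_mul_of_nonneg_left hfp (sub_nonneg.2 hμx)
          have i3 : 0 ≤ q * ((xa - μ) * (p - xa) * (p - μ)) :=
            mul_nonneg hq.le (mul_nonneg (mul_nonneg (sub_nonneg.2 hμx) (sub_nonneg.2 hp')) (by linarith))
          have : (p - μ) * (K * (1 - xa) + A * l * xa) ≤ (p - μ) * (q * (xa * (1 - xa))) := by
            nlinarith
          exact le_of_mul_le_mul_left this (by linarith)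
      -- lam bound
      have hlam : 2 / 3 * lam l x ^ 2 * (1 - xa) ≤ x * l := by
        rcases lam_case l x hl hx hx1 with ⟨h, e, h1x⟩ | ⟨h, e⟩
        · have hb : 2 / 3 * (1 - xa) ≤ 1 - x := by
            have : A * xa ≤ A * (l * (1 - xa)) := by gcongr
            have : A * l * (1 - xa) ≤ 1 / 4 * (1 - xa) := by gcongr
            nlinarith
          have : lam l x ^ 2 * (1 - x) ≤ x * l := by
            rw [e, div_pow, div_mul_eq_mul_div, div_le_iff₀ (by positivity)]
            have := mul_le_mul_of_nonneg_left h (mul_pos hx h1x).le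
            nlinarith
          nlinarith [mul_le_mul_of_nonneg_left hb (sq_nonneg (lam l x))]
        · have hb : 2 / 3 * ((l + 1) * (1 - xa)) ≤ 1 := by
            -- (l+1) xa ≥ l - 4/3 A l xa...
            have : A * xa ≤ A * (l * (1 - xa)) := by gcongr
            have hAll : A * l * ((l + 1) * (1 - xa)) ≤ 1 / 4 * ((l + 1) * (1 - xa)) := by gcongr
            have : (l + 1) * (A * xa) ≤ (l + 1) * (A * (l * (1 - xa))) := by gcongr
            nlinarith
          have : lam l x ^ 2 * (2 / 3 * (1 - xa)) ≤ x * (l * (l + 1)) * (2 / 3 * (1 - xa)) := by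
            gcongr
          have hxl : 0 < x * l := by positivity
          nlinarith [mul_le_mul_of_nonneg_left hb hxl.le]
      have e1 : 2 / 3 * A * lam l x ^ 2 ≤ A * (x * l / (1 - xa)) := by
        have : 2 / 3 * lam l x ^ 2 ≤ x * l / (1 - xa) := by rwa [le_div_iff₀ hxa1]
        nlinarith
      have e2 : A * (x * l / (1 - xa)) + K * (x / xa) =
          x * ((K * (1 - xa) + A * l * xa) / (xa * (1 - xa))) := by
        field_simp
        ring
      have e3 : (K * (1 - xa) + A * l * xa) / (xa * (1 - xa)) ≤ q := by
        rwa [div_le_iff₀ (by positivity)]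
      nlinarith [mul_le_mul_of_nonneg_left e3 hx.le]
    · have e1 : K * (x / xa) ≤ K * (x * ((l + 1) / l)) := by
        gcongr
        rw [div_eq_mul_inv]
        gcongr
        rw [inv_le_comm₀ hxa (by positivity), inv_div, div_le_iff₀ (by linarith)]
        nlinarith
      have e2 : A * lam l x ^ 2 ≤ A * (x * (l * (l + 1))) := by gcongr
      have e3 : K * ((l + 1) / l) + A * (l * (l + 1)) ≤ q := by
        have : K * ((l + 1) / l) + A * (l * (l + 1)) = (K + A * l ^ 2) * (l + 1) / l := by
          field_simp
        rw [this, div_le_iff₀ (by linarith)]; exact h4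
      have e4 : 0 ≤ A * lam l x ^ 2 := by positivity
      nlinarith [mul_le_mul_of_nonneg_left e3 hx.le]
  refine key.trans_lt ?_
  rw [lt_div_iff₀ h1]
  nlinarith

lemma cell (s a b : ℝ) (hs : 0 < s) (hab : a < b) (g w L C : ℝ → ℝ)
    (hg : ContinuousOn g (Icc a b)) (hw : ContinuousOn w (Icc a b))
    (hL : ContinuousOn L (Icc a b)) (hC : ContinuousOn C (Icc a b))
    (hgp : ∀ t ∈ Icc a b, 0 < g t) (hwp : ∀ t ∈ Icc a b, 0 < w t) (hwa : w a = 1)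
    (hd : ∀ t ∈ Ioo a b, HasDerivAt w (-(w t * g t) / (2 * s)) t)
    (r D c1 : ℝ) (hr : r = 1 / w b)
    (hpt : ∀ t ∈ Icc a b, s * (r - 1) * L t ^ 2 + D / w t ^ 2 < C t)
    (hCc : ∀ t ∈ Icc a b, C t ≤ c1) :
    (1 / 2 * r ^ 2 * (∫ t in a..b, L t * w t * g t) ^ 2 + r ^ 2 * D * (∫ t in a..b, w t * g t)
      < r * ∫ t in a..b, C t * w t * g t) ∧
    r * (∫ t in a..b, C t * w t * g t) ≤ c1 * (2 * s * (r - 1)) ∧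
    0 < ∫ t in a..b, w t * g t := by
  have hu : uIcc a b = Icc a b := uIcc_of_le hab.le
  have ii : ∀ f : ℝ → ℝ, ContinuousOn f (Icc a b) → IntervalIntegrable f volume a b := fun f hf =>
    ContinuousOn.intervalIntegrable (by rwa [hu])
  have hwb : 0 < w b := hwp b ⟨hab.le, le_rfl⟩
  have hr0 : 0 < r := by rw [hr]; positivity
  have hrw : r * w b = 1 := by rw [hr]; field_simp
  have hwne : ∀ t ∈ Icc a b, w t ≠ 0 := fun t ht => (hwp t ht).ne'
  have hwg : ContinuousOn (fun t => w t * g t) (Icc a b) := hw.mul hg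
  have hI1 : ∫ t in a..b, w t * g t = 2 * s * (1 - w b) := by
    have := intervalIntegral.integral_eq_sub_of_hasDerivAt_of_le hab.le
      (f := fun t => -(2 * s) * w t) (f' := fun t => w t * g t) (hw.const_smul (-(2 * s)) ) ?_ (ii _ hwg)
    · rw [this, hwa]; ring
    · intro t ht
      refine ((hd t ht).const_mul (-(2 * s))).congr_deriv ?_
      field_simp
  have hwg2 : ContinuousOn (fun t => 1 / w t ^ 2 * (w t * g t)) (Icc a b) :=
    (continuousOn_const.div (hw.pow 2) (fun t ht => pow_ne_zero 2 (hwne t ht))).mul hwg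
  have hI2 : ∫ t in a..b, 1 / w t ^ 2 * (w t * g t) = 2 * s * (r - 1) := by
    have := intervalIntegral.integral_eq_sub_of_hasDerivAt_of_le hab.le
      (f := fun t => (2 * s) * (w t)⁻¹) (f' := fun t => 1 / w t ^ 2 * (w t * g t))
      ((hw.inv₀ hwne).const_smul (2 * s)) ?_ (ii _ hwg2)
    · rw [this, hwa, hr]; ring
    · intro t ht
      have hne := hwne t ⟨ht.1.le, ht.2.le⟩
      refine ((hd t ht).inv hne).const_mul (2 * s) |>.congr_deriv ?_
      field_simp
  set I1 := ∫ t in a..b, w t * g t with hI1def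
  have hI1pos : 0 < I1 := by
    apply intervalIntegral.intervalIntegral_pos_of_pos_on (ii _ hwg) _ hab
    intro t ht
    exact mul_pos (hwp t ⟨ht.1.le, ht.2.le⟩) (hgp t ⟨ht.1.le, ht.2.le⟩)
  have hrI : r * I1 = 2 * s * (r - 1) := by
    rw [hI1]; linear_combination -(2 * s) * hrw
  have hLc : ContinuousOn (fun t => L t * w t * g t) (Icc a b) := (hL.mul hw).mul hg
  have hL2c : ContinuousOn (fun t => L t ^ 2 * (w t * g t)) (Icc a b) := (hL.pow 2).mul hwg
  have hCcc : ContinuousOn (fun t => C t * w t * g t) (Icc a b) := (hC.mul hw).mul hg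
  set IL := ∫ t in a..b, L t * w t * g t with hIL
  set IL2 := ∫ t in a..b, L t ^ 2 * (w t * g t) with hIL2
  set IC := ∫ t in a..b, C t * w t * g t with hIC
  have hCS : IL ^ 2 ≤ I1 * IL2 := by
    set k := IL / I1 with hk
    have h0 : 0 ≤ ∫ t in a..b, (L t - k) ^ 2 * (w t * g t) := by
      apply intervalIntegral.integral_nonneg hab.le
      intro t ht
      have := hwp t ht
      have := hgp t ht
      positivity
    have h1 : ∫ t in a..b, (L t - k) ^ 2 * (w t * g t) = IL2 - 2 * k * IL + k ^ 2 * I1 := by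
      rw [hIL2, hIL, hI1def, ← intervalIntegral.integral_const_mul,
        ← intervalIntegral.integral_const_mul, ← intervalIntegral.integral_sub (ii _ hL2c)
          ((ii _ hLc).const_mul _), ← intervalIntegral.integral_add
          ((ii _ hL2c).sub ((ii _ hLc).const_mul _)) ((ii _ hwg).const_mul _)]
      congr 1; ext t; ring
    rw [h1] at h0
    have h2 : IL = k * I1 := by rw [hk]; field_simp
    rw [h2] at h0 ⊢
    nlinarith
  have hstrict : s * (r - 1) * IL2 + D * (2 * s * (r - 1)) < IC := by
    rw [← hI2, hIL2, ← intervalIntegral.integral_const_mul, ← intervalIntegral.integral_const_mul,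
      ← intervalIntegral.integral_add ((ii _ hL2c).const_mul _) ((ii _ hwg2).const_mul _)]
    have hpt' : ∀ t ∈ Icc a b, s * (r - 1) * (L t ^ 2 * (w t * g t)) + D * (1 / w t ^ 2 * (w t * g t))
        < C t * w t * g t := by
      intro t ht
      have h1 := hpt t ht
      have h2 : 0 < w t * g t := mul_pos (hwp t ht) (hgp t ht)
      have := mul_lt_mul_of_pos_right h1 h2
      calc _ = (s * (r - 1) * L t ^ 2 + D / w t ^ 2) * (w t * g t) := by ring
        _ < _ := this
        _ = _ := by ring
    apply intervalIntegral.integral_lt_integral_of_continuousOn_of_le_of_exists_lt hab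
    · exact (hL2c.const_smul (s * (r - 1))).add (hwg2.const_smul D)
    · exact hCcc
    · intro t ht; exact (hpt' t ⟨ht.1.le, ht.2⟩).le
    · exact ⟨a, ⟨le_rfl, hab.le⟩, hpt' a ⟨le_rfl, hab.le⟩⟩
  refine ⟨?_, ?_, hI1pos⟩
  · have h1 : r ^ 2 * IL ^ 2 ≤ r ^ 2 * (I1 * IL2) := by gcongr
    have h2 : r ^ 2 * (I1 * IL2) = r * (2 * s * (r - 1) * IL2) := by rw [← hrI]; ring
    have h3 : r ^ 2 * D * I1 = r * (D * (2 * s * (r - 1))) := by rw [← hrI]; ring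
    have h4 := mul_lt_mul_of_pos_left hstrict hr0
    rw [h3]
    nlinarith
  · rw [← hrI]
    have : IC ≤ c1 * I1 := by
      rw [hIC, hI1def, ← intervalIntegral.integral_const_mul]
      apply intervalIntegral.integral_mono_on hab.le (ii _ hCcc) ((ii _ hwg).const_mul _)
      intro t ht
      have h2 : 0 < w t * g t := mul_pos (hwp t ht) (hgp t ht)
      calc C t * w t * g t = C t * (w t * g t) := by ring
        _ ≤ _ := by gcongr; exact hCc t ht
    calc r * IC ≤ r * (c1 * I1) := by gcongr
      _ = _ := by ring

lemma exp_le_four_thirds (y : ℝ) (h0 : 0 ≤ y) (h1 : y ≤ 1 / 4) : Real.exp y ≤ 1 + 4 / 3 * y := by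
  have h := Real.exp_bound_div_one_sub_of_interval h0 (by linarith)
  refine h.trans ?_
  rw [div_le_iff₀ (by linarith)]
  nlinarith

lemma conc_eq (s : ℝ) (hs : 0 < s) (β : ℝ → ℝ) (Cs t : ℝ) (hC : 0 < Cs)
    (h : 0 < 1 - mcoef s β t ^ 2 * ((s * Cs - 1) / (s * Cs))) :
    concConst s β Cs t = (mcoef s β t ^ 2 * ((s * Cs - 1) / (s * Cs)) /
      (1 - mcoef s β t ^ 2 * ((s * Cs - 1) / (s * Cs)))) / s := by
  rw [concConst]
  set x := mcoef s β t ^ 2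
  have e : x / Cs + s * (1 - x) = s * (1 - x * ((s * Cs - 1) / (s * Cs))) := by
    field_simp
    ring
  rw [e]
  set z := x * ((s * Cs - 1) / (s * Cs))
  have := h.ne'
  field_simp
  ring

lemma lip_eq (s : ℝ) (hs : 0 < s) (β : ℝ → ℝ) (Ls t : ℝ) (hL : 0 < Ls) (hm1 : mcoef s β t ≤ 1) :
    lipConst s β Ls t = lam (s * Ls) (mcoef s β t ^ 2) / s := by
  have hm : 0 < mcoef s β t := Real.exp_pos _
  rw [lipConst, lam]
  by_cases h : mcoef s β t = 1
  · rw [if_pos h, h]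
    have : (1 - 1 ^ 2 : ℝ) ≤ 1 ^ 2 / (s * Ls) := by
      have : (0 : ℝ) < 1 / (s * Ls) := by positivity
      have e : (1 - 1 ^ 2 : ℝ) = 0 := by norm_num
      rw [e, one_pow]
      exact this.le
    rw [max_eq_right this]
    field_simp
  · rw [if_neg h]
    have hlt : mcoef s β t < 1 := lt_of_le_of_ne hm1 h
    set x := mcoef s β t ^ 2 with hx
    have hx0 : 0 < x := by positivity
    have hx1 : 0 < 1 - x := by rw [hx]; nlinarith
    rcases le_total (1 - x) (x / (s * Ls)) with h' | h'
    · rw [max_eq_right h', min_eq_right]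
      · field_simp
      · rw [le_div_iff₀ (by positivity)] at h'
        rw [div_le_div_iff₀ hx0 (by positivity)]
        nlinarith
    · rw [max_eq_left h', min_eq_left]
      · field_simp
      · rw [div_le_iff₀ (by positivity)] at h'
        rw [div_le_div_iff₀ (by positivity) hx0]
        nlinarith

lemma cubic_aux (c l q A r : ℝ) (hC : 1 < c) (hcl : c ≤ l) (hA0 : 0 < A)
    (hrA : r - 1 ≤ 2 / 3 * A) (hqc : q * c = c - 1) (hAq : A * (l * (l + 1)) ≤ q) :
    2 * (c - 1) * (r - 1) < 1 / 2 := by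
  have h1 : 2 * (c - 1) * (r - 1) ≤ 2 * (c - 1) * (2 / 3 * A) := by
    have : 0 < c - 1 := by linarith
    gcongr
  refine lt_of_le_of_lt h1 ?_
  have h2 : A * (c * (c + 1)) ≤ q := by
    refine le_trans ?_ hAq
    have : c * (c + 1) ≤ l * (l + 1) := by nlinarith
    gcongr
  have h3 : A * (c * (c + 1)) * c ≤ c - 1 := by
    rw [← hqc]; gcongr
  have h4 : (2 * (c - 1) * (2 / 3 * A)) * (c * (c + 1) * c) ≤ 4 / 3 * (c - 1) ^ 2 := by
    have := mul_le_mul_of_nonneg_left h3 (by linarith : 0 ≤ 4 / 3 * (c - 1))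
    calc _ = 4 / 3 * (c - 1) * (A * (c * (c + 1)) * c) := by ring
      _ ≤ _ := this
      _ = _ := by ring
  have h5 : 4 / 3 * (c - 1) ^ 2 < 1 / 2 * (c * (c + 1) * c) := by
    nlinarith [sq_nonneg (c - 1), mul_pos (by linarith : 0 < c) (by linarith : 0 < c - 1),
      mul_nonneg (by linarith : 0 ≤ c - 1) (sq_nonneg (c - 1))]
  exact lt_of_mul_lt_mul_right (h4.trans_lt h5) (by positivity)

set_option maxHeartbeats 2000000 in
lemma core (s T : ℝ) (hs : 0 < s) (hT : 0 < T)
    (β : ℝ → ℝ) (hβc : ContinuousOn β (Icc 0 T)) (hβpos : ∀ t ∈ Icc (0:ℝ) T, 0 < β t)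
    (hβmono : MonotoneOn β (Icc 0 T))
    (Cs Ls : ℝ) (hC : 1 < s * Cs) (hCL : Cs ≤ Ls) (a b h M A q : ℝ) (ha : 0 ≤ a) (hab : a < b)
    (hbT : b ≤ T) (hh : h = b - a) (hA : A = h * β T / s) (hq : q = (s * Cs - 1) / (s * Cs))
    (hAq : A * (s * Ls * (s * Ls + 1)) ≤ q)
    (hpw : ∀ xa x : ℝ, mcoef s β T ^ 2 ≤ xa → xa ≤ x → x ≤ 1 → x ≤ xa * (1 + 4 / 3 * A) →
      2 / 3 * A * lam (s * Ls) x ^ 2 + s * (M * h) * (x / xa) < x * q / (1 - x * q)) :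
    let L := lipConst s β Ls
    let C := concConst s β Cs
    let r := mtilde s T β a / mtilde s T β b
    (1 / 2 * r ^ 2 * (∫ t in a..b, L (T - t) * (mtilde s T β t / mtilde s T β a) * β (T - t)) ^ 2
      + r ^ 2 * (M * h) * (∫ t in a..b, (mtilde s T β t / mtilde s T β a) * β (T - t))
      < r * ∫ t in a..b, C (T - t) * (mtilde s T β t / mtilde s T β a) * β (T - t)) ∧
    r * (∫ t in a..b, C (T - t) * (mtilde s T β t / mtilde s T β a) * β (T - t)) < 1 / 2 ∧
    0 < ∫ t in a..b, (mtilde s T β t / mtilde s T β a) * β (T - t) := by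
  intro L C r
  have hCs : 0 < Cs := by
    by_contra hc
    nlinarith
  have hLs : 0 < Ls := by linarith
  set c := s * Cs with hc
  set l := s * Ls with hl
  have hcl : c ≤ l := by rw [hc, hl]; gcongr
  have hl1 : 1 < l := by linarith
  have hq0 : 0 < q := by rw [hq]; exact div_pos (by linarith) (by linarith)
  have hq1 : q < 1 := by rw [hq, div_lt_one (by linarith)]; linarith
  have hTm : T ∈ Icc (0:ℝ) T := ⟨hT.le, le_rfl⟩
  have hB : 0 < β T := hβpos T hTm
  have hh0 : 0 < h := by rw [hh]; linarith
  have hA0 : 0 < A := by rw [hA]; positivity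
  have hA4 : A ≤ 1 / 4 := by
    have h1 : A * (l * (l + 1)) ≤ 1 := by linarith
    have h2 : 2 ≤ l * (l + 1) := by nlinarith
    have hqc : q * c = c - 1 := by rw [hq]; field_simp
    have h3 : q ≤ 1 / 4 * (c * (c + 1)) := by
      have : q * c ≤ 1 / 4 * (c * (c + 1)) * c := by
        rw [hqc]; nlinarith [sq_nonneg (c - 3 / 2), mul_pos (by linarith : 0 < c) (by linarith : 0 < c - 1)]
      exact le_of_mul_le_mul_right this (by linarith)
    have h4 : c * (c + 1) ≤ l * (l + 1) := by nlinarith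
    have h5 : A * (l * (l + 1)) ≤ 1 / 4 * (l * (l + 1)) := by linarith
    exact le_of_mul_le_mul_right h5 (by linarith)
  -- the reversed schedule
  have hmaps : MapsTo (fun t : ℝ => T - t) (Icc 0 T) (Icc 0 T) := fun t ht =>
    ⟨by linarith [ht.2], by linarith [ht.1]⟩
  have hgc : ContinuousOn (fun t => β (T - t)) (Icc 0 T) :=
    hβc.comp (by fun_prop) hmaps
  have hgp : ∀ t ∈ Icc (0:ℝ) T, 0 < β (T - t) := fun t ht => hβpos _ (hmaps ht)
  have hgB : ∀ t ∈ Icc (0:ℝ) T, β (T - t) ≤ β T := fun t ht =>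
    hβmono (hmaps ht) hTm (hmaps ht).2
  have gi : ∀ u v : ℝ, u ∈ Icc (0:ℝ) T → v ∈ Icc (0:ℝ) T →
      IntervalIntegrable (fun t => β (T - t)) volume u v := fun u v hu hv =>
    (hgc.mono (uIcc_subset_Icc hu hv)).intervalIntegrable
  have h0m : (0:ℝ) ∈ Icc (0:ℝ) T := ⟨le_rfl, hT.le⟩
  set G : ℝ → ℝ := fun t => ∫ u in (0:ℝ)..t, β (T - u) with hG
  have hGsub : ∀ u ∈ Icc (0:ℝ) T, ∀ v ∈ Icc (0:ℝ) T, G v - G u = ∫ x in u..v, β (T - x) := by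
    intro u hu v hv
    exact intervalIntegral.integral_interval_sub_left (gi 0 v h0m hv) (gi 0 u h0m hu)
  have hGmono : ∀ u ∈ Icc (0:ℝ) T, ∀ v ∈ Icc (0:ℝ) T, u ≤ v → G u ≤ G v := by
    intro u hu v hv huv
    have := hGsub u hu v hv
    have h2 : 0 ≤ ∫ x in u..v, β (T - x) := intervalIntegral.integral_nonneg huv fun x hx =>
      (hgp x ⟨hu.1.trans hx.1, hx.2.trans hv.2⟩).le
    linarith
  have hGle : ∀ u ∈ Icc (0:ℝ) T, ∀ v ∈ Icc (0:ℝ) T, u ≤ v → G v - G u ≤ (v - u) * β T := by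
    intro u hu v hv huv
    rw [hGsub u hu v hv]
    have : ∫ x in u..v, β (T - x) ≤ ∫ x in u..v, β T :=
      intervalIntegral.integral_mono_on huv (gi u v hu hv) (by simp) fun x hx =>
        hgB x ⟨hu.1.trans hx.1, hx.2.trans hv.2⟩
    simpa using this
  have hGc : ContinuousOn G (Icc 0 T) := by
    have := intervalIntegral.continuousOn_primitive_interval (a := 0) (b := T) (μ := volume)
      (f := fun u => β (T - u)) (by rw [uIcc_of_le hT.le]; exact hgc.integrableOn_Icc)
    rwa [uIcc_of_le hT.le] at this
  have hGd : ∀ t ∈ Ioo (0:ℝ) T, HasDerivAt G (β (T - t)) t := by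
    intro t ht
    have ho : ContinuousOn (fun t => β (T - t)) (Ioo 0 T) := hgc.mono Ioo_subset_Icc_self
    exact intervalIntegral.integral_hasDerivAt_right (gi 0 t h0m ⟨ht.1.le, ht.2.le⟩)
      (ho.stronglyMeasurableAtFilter isOpen_Ioo t ht) (ho.continuousAt (isOpen_Ioo.mem_nhds ht))
  have hmt : ∀ t, mtilde s T β t = Real.exp (-(1 / (2 * s)) * G t) := fun t => rfl
  have hmc : ∀ t ∈ Icc (0:ℝ) T, mcoef s β (T - t) ^ 2 = Real.exp (-(G T - G t) / s) := by
    intro t ht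
    rw [mcoef, hGsub t ht T hTm, intervalIntegral.integral_comp_sub_left (fun x => β x) T,
      ← Real.exp_nat_mul]
    congr 1
    simp only [sub_self]
    push_cast
    field_simp
  have hsub : Icc a b ⊆ Icc (0:ℝ) T := Icc_subset_Icc ha hbT
  have ham : a ∈ Icc (0:ℝ) T := ⟨ha, by linarith⟩
  have hbm : b ∈ Icc (0:ℝ) T := ⟨by linarith, hbT⟩
  set x : ℝ → ℝ := fun t => mcoef s β (T - t) ^ 2 with hx
  have hx0 : ∀ t, 0 < x t := fun t => pow_pos (Real.exp_pos _) 2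
  have hx1 : ∀ t ∈ Icc (0:ℝ) T, x t ≤ 1 := by
    intro t ht
    rw [hx]; simp only
    rw [hmc t ht, Real.exp_le_one_iff]
    have := hGmono t ht T hTm ht.2
    exact div_nonpos_of_nonpos_of_nonneg (by linarith) hs.le
  have hm1 : ∀ t ∈ Icc (0:ℝ) T, mcoef s β (T - t) ≤ 1 := by
    intro t ht
    have h1 := hx1 t ht
    have h2 : 0 < mcoef s β (T - t) := Real.exp_pos _
    simp only [hx] at h1
    nlinarith
  have hxmono : ∀ u ∈ Icc (0:ℝ) T, ∀ v ∈ Icc (0:ℝ) T, u ≤ v → x u ≤ x v := by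
    intro u hu v hv huv
    simp only [hx]
    rw [hmc u hu, hmc v hv, Real.exp_le_exp]
    have := hGmono u hu v hv huv
    gcongr
  have hxc : ContinuousOn x (Icc 0 T) := by
    have : ContinuousOn (fun t => Real.exp (-(G T - G t) / s)) (Icc 0 T) := by fun_prop
    exact this.congr hmc
  have hxq : ∀ t ∈ Icc (0:ℝ) T, 0 < 1 - x t * q := by
    intro t ht
    have := hx1 t ht
    nlinarith [hx0 t]
  have hCeq : ∀ t ∈ Icc (0:ℝ) T, C (T - t) = x t * q / (1 - x t * q) / s := by
    intro t ht
    have := conc_eq s hs β Cs (T - t) hCs (by rw [← hc, ← hq]; exact hxq t ht)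
    rw [← hc, ← hq] at this
    exact this
  have hLeq : ∀ t ∈ Icc (0:ℝ) T, L (T - t) = lam l (x t) / s := fun t ht =>
    lip_eq s hs β Ls (T - t) hLs (hm1 t ht)
  set w : ℝ → ℝ := fun t => mtilde s T β t / mtilde s T β a with hw
  have hwe : ∀ t, w t = Real.exp (-(1 / (2 * s)) * (G t - G a)) := by
    intro t
    simp only [hw]
    rw [hmt, hmt, ← Real.exp_sub]
    congr 1; ring
  have hr : r = 1 / w b := by simp only [r, hw]; rw [one_div_div]
  have hrexp : r = Real.exp ((G b - G a) / (2 * s)) := by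
    rw [hr, hwe, one_div, ← Real.exp_neg]
    congr 1; ring
  have hrA : r - 1 ≤ 2 / 3 * A := by
    have h1 : (G b - G a) / (2 * s) ≤ A / 2 := by
      rw [hA, hh]
      have := hGle a ham b hbm hab.le
      rw [div_le_iff₀ (by positivity)]
      field_simp
      linarith
    have := (Real.exp_le_exp.2 h1).trans (exp_le_four_thirds (A / 2) (by linarith) (by linarith))
    rw [hrexp]; linarith
  have hr1 : 0 ≤ r - 1 := by
    rw [hrexp, sub_nonneg, Real.one_le_exp_iff]
    have := hGmono a ham b hbm hab.le
    exact div_nonneg (by linarith) (by linarith)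
  have hwx : ∀ t ∈ Icc a b, 1 / w t ^ 2 = x t / x a := by
    intro t ht
    simp only [hx]
    rw [hwe, hmc t (hsub ht), hmc a ham, ← Real.exp_nat_mul, ← Real.exp_sub, one_div, ← Real.exp_neg]
    congr 1
    push_cast
    field_simp
    ring
  have hxA : ∀ t ∈ Icc a b, x t ≤ x a * (1 + 4 / 3 * A) := by
    intro t ht
    have h1 : (G t - G a) / s ≤ A := by
      have h2 := hGle a ham t (hsub ht) ht.1
      have h3 : (t - a) * β T ≤ (b - a) * β T := by gcongr; exact ht.2
      rw [hA, hh]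
      gcongr
      linarith
    have h2 := (Real.exp_le_exp.2 h1).trans (exp_le_four_thirds A hA0.le hA4)
    have h3 : x t = x a * Real.exp ((G t - G a) / s) := by
      simp only [hx]
      rw [hmc t (hsub ht), hmc a ham, ← Real.exp_add]
      congr 1; ring
    rw [h3]
    have := hx0 a
    gcongr
  have hwc : ContinuousOn w (Icc a b) := by
    have h1 := hGc.mono hsub
    have : ContinuousOn (fun t => Real.exp (-(1 / (2 * s)) * (G t - G a))) (Icc a b) := by fun_prop
    exact this.congr fun t _ => hwe t
  have hxc' := hxc.mono hsub
  have hlc : ContinuousOn (fun t => L (T - t)) (Icc a b) := by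
    have : ContinuousOn (fun t => lam l (x t) / s) (Icc a b) := by
      unfold lam
      refine ContinuousOn.div_const (ContinuousOn.sub (ContinuousOn.div continuousOn_const ?_ ?_)
        continuousOn_const) _
      · exact ContinuousOn.sup (f := fun t => 1 - x t) (g := fun t => x t / l)
          (continuousOn_const.sub hxc') (hxc'.div_const _)
      · intro t _
        have := hx0 t
        have h2 : 0 < x t / l := by positivity
        exact (lt_of_lt_of_le h2 (le_max_right _ _)).ne'
    exact this.congr fun t ht => hLeq t (hsub ht)
  have hcc : ContinuousOn (fun t => C (T - t)) (Icc a b) := by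
    have : ContinuousOn (fun t => x t * q / (1 - x t * q) / s) (Icc a b) := by
      refine ContinuousOn.div_const (ContinuousOn.div (hxc'.mul continuousOn_const)
        (continuousOn_const.sub (hxc'.mul continuousOn_const)) ?_) _
      exact fun t ht => (hxq t (hsub ht)).ne'
    exact this.congr fun t ht => hCeq t (hsub ht)
  have hqc : q * c = c - 1 := by rw [hq]; field_simp
  have main := cell s a b hs hab (fun t => β (T - t)) w (fun t => L (T - t)) (fun t => C (T - t))
    (hgc.mono hsub) hwc hlc hcc (fun t ht => hgp t (hsub ht))
    (fun t _ => by rw [hwe]; exact Real.exp_pos _) (by rw [hwe]; simp) ?_ r (M * h) ((c - 1) / s) hr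
    ?_ ?_
  · obtain ⟨m1, m2, m3⟩ := main
    refine ⟨m1, lt_of_le_of_lt m2 ?_, m3⟩
    have e : (c - 1) / s * (2 * s * (r - 1)) = 2 * (c - 1) * (r - 1) := by field_simp
    rw [e]
    exact cubic_aux c l q A r hC hcl hA0 hrA hqc hAq
  · intro t ht
    have htm : t ∈ Ioo (0:ℝ) T := ⟨lt_of_le_of_lt ha ht.1, lt_of_lt_of_le ht.2 hbT⟩
    have h1 := (((hGd t htm).sub_const (G a)).const_mul (-(1 / (2 * s)))).exp
    have h2 : w = fun t => Real.exp (-(1 / (2 * s)) * (G t - G a)) := funext hwe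
    rw [h2]
    refine h1.congr_deriv ?_
    simp only
    ring
  · intro t ht
    have hμ : mcoef s β T ^ 2 ≤ x a := by
      have := hxmono 0 h0m a ham ha
      simpa [hx] using this
    have hp := hpw (x a) (x t) hμ (hxmono a ham t (hsub ht) ht.1) (hx1 t (hsub ht)) (hxA t ht)
    rw [hCeq t (hsub ht), hLeq t (hsub ht), div_eq_mul_one_div (M * h), hwx t ht, lt_div_iff₀ hs]
    refine lt_of_le_of_lt ?_ hp
    have e : (s * (r - 1) * (lam l (x t) / s) ^ 2 + M * h * (x t / x a)) * s
        = (r - 1) * lam l (x t) ^ 2 + s * (M * h) * (x t / x a) := by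
      field_simp
    rw [e]
    gcongr
  · intro t ht
    rw [hCeq t (hsub ht)]
    gcongr
    have h1 := hxq t (hsub ht)
    have h2 := hx1 t (hsub ht)
    rw [div_le_iff₀ h1]
    have h3 : x t * q * c ≤ 1 * (c - 1) := by
      rw [mul_assoc, hqc]
      gcongr
    nlinarith

lemma hAq_aux (K A l q : ℝ) (hK : 0 ≤ K) (hl : 1 < l)
    (h4 : (K + A * l ^ 2) * (l + 1) ≤ q * l) : A * (l * (l + 1)) ≤ q := by
  have h1 : 0 ≤ K * (l + 1) := mul_nonneg hK (by linarith)
  have : A * (l * (l + 1)) * l ≤ q * l := by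
    calc A * (l * (l + 1)) * l = (K + A * l ^ 2) * (l + 1) - K * (l + 1) := by ring
      _ ≤ _ := by linarith
  exact le_of_mul_le_mul_right this (by linarith)

lemma hAl_aux (c A l q : ℝ) (hc : 1 < c) (hcl : c ≤ l) (hq : q = (c - 1) / c)
    (hAq : A * (l * (l + 1)) ≤ q) : A * l ≤ 1 / 4 := by
  have h5 : q ≤ 1 / 4 * (c + 1) := by
    rw [hq, div_le_iff₀ (by linarith)]
    nlinarith [sq_nonneg (c - 3 / 2)]
  have h6 : A * l * (l + 1) ≤ 1 / 4 * (l + 1) := by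
    calc A * l * (l + 1) = A * (l * (l + 1)) := by ring
      _ ≤ _ := by linarith
  exact le_of_mul_le_mul_right h6 (by linarith)

lemma fin1 (r IL IC : ℝ) (I1 : ℝ) (m1 : 1 / 2 * r ^ 2 * IL ^ 2 + r ^ 2 * (0 * I1) < r * IC)
    (m2 : r * IC < 1 / 2) :
    0 < 1 + r ^ 2 * IL ^ 2 - 2 * r * IC ∧ 1 + r ^ 2 * IL ^ 2 - 2 * r * IC < 1 := by
  have p1 : 0 ≤ r ^ 2 * IL ^ 2 := by positivity
  constructor <;> linarith

lemma fin2 (r IL IC I1 M h : ℝ) (hM : 0 ≤ M) (hh : 0 ≤ h)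
    (m1 : 1 / 2 * r ^ 2 * IL ^ 2 + r ^ 2 * (M * h) * I1 < r * IC)
    (m2 : r * IC < 1 / 2) (m3 : 0 < I1) :
    0 < 1 + 1 / 2 * r ^ 2 * IL ^ 2 - r * IC + r ^ 2 * M * h * I1 ∧
      1 + 1 / 2 * r ^ 2 * IL ^ 2 - r * IC + r ^ 2 * M * h * I1 < 1 := by
  have p1 : 0 ≤ r ^ 2 * IL ^ 2 := by positivity
  have p2 : 0 ≤ r ^ 2 * M * h * I1 := by positivity
  constructor <;> linarith

/-- explicit step-size conditions guaranteeing per-step contraction factors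
in `(0,1)` when the data distribution is `L*`-smooth and `C*`-strongly log-concave with
`1/σ² < C* ≤ L*`, with `C_t` and `L_t` given by the explicit propagation formulas. -/
theorem step_size_choice_explicit (σ T : ℝ) (hσ : 0 < σ) (hT : 0 < T)
    (β : ℝ → ℝ) (hβc : ContinuousOn β (Icc 0 T)) (hβpos : ∀ t ∈ Icc (0:ℝ) T, 0 < β t)
    (hβmono : MonotoneOn β (Icc 0 T))
    (Cstar Lstar : ℝ) (hC : 1 / σ ^ 2 < Cstar) (hCL : Cstar ≤ Lstar)
    (N : ℕ) (hN : 1 ≤ N) :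
    (T / N ≤
        min (2 * σ ^ 2 * Real.log 2 / β T)
          (min ((σ ^ 2 * Cstar - 1) / (σ ^ 2 * Cstar * (σ ^ 2 * Lstar + 1) * Lstar * β T))
            ((σ ^ 2 * Cstar - 1) / ((σ ^ 2 * Lstar - 1) * Lstar * β T))) →
      ∀ k < N,
        0 < stepE1 (σ ^ 2) T β (lipConst (σ ^ 2) β Lstar) (concConst (σ ^ 2) β Cstar)
              ((k : ℝ) * (T / N)) (((k : ℝ) + 1) * (T / N)) ∧
          stepE1 (σ ^ 2) T β (lipConst (σ ^ 2) β Lstar) (concConst (σ ^ 2) β Cstar)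
              ((k : ℝ) * (T / N)) (((k : ℝ) + 1) * (T / N)) < 1) ∧
      ∀ M : ℝ, 0 ≤ M →
        T / N ≤
          min (2 * σ ^ 2 * Real.log 2 / β T)
            (min ((σ ^ 2 * Cstar - 1) / (σ ^ 2 * M + β T * Lstar * (σ ^ 2 * Lstar - 1)))
              (min ((σ ^ 2 * Cstar - 1) / (σ ^ 2 * Cstar) *
                  (mcoef (σ ^ 2) β T ^ 2 * (1 - mcoef (σ ^ 2) β T ^ 2) /
                    (σ ^ 2 * M * (1 - mcoef (σ ^ 2) β T ^ 2) +
                      β T * Lstar * mcoef (σ ^ 2) β T ^ 2)))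
                ((σ ^ 2 * Cstar - 1) * Lstar /
                  (σ ^ 2 * Cstar * (σ ^ 2 * Lstar + 1) * (M + β T * Lstar ^ 2))))) →
        ∀ k < N,
          0 < stepE2 (σ ^ 2) T β (lipConst (σ ^ 2) β Lstar) (concConst (σ ^ 2) β Cstar)
                M (T / N) ((k : ℝ) * (T / N)) (((k : ℝ) + 1) * (T / N)) ∧
            stepE2 (σ ^ 2) T β (lipConst (σ ^ 2) β Lstar) (concConst (σ ^ 2) β Cstar)
                M (T / N) ((k : ℝ) * (T / N)) (((k : ℝ) + 1) * (T / N)) < 1 := by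
  have hs : 0 < σ ^ 2 := by positivity
  set s := σ ^ 2 with hsdef
  have hC1 : 1 < s * Cstar := by
    rw [div_lt_iff₀ hs] at hC; linarith
  have hNpos : (0:ℝ) < N := by exact_mod_cast hN
  have hCs : 0 < Cstar := by
    by_contra hc
    nlinarith
  have hLs : 0 < Lstar := by linarith
  have hB : 0 < β T := hβpos T ⟨hT.le, le_rfl⟩
  set h := T / N with hh
  have hh0 : 0 < h := by positivity
  have hcell : ∀ k < N, 0 ≤ (k:ℝ) * h ∧ (k:ℝ) * h < ((k:ℝ) + 1) * h ∧ ((k:ℝ) + 1) * h ≤ T := by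
    intro k hk
    refine ⟨by positivity, by nlinarith, ?_⟩
    have hk' : (k:ℝ) + 1 ≤ N := by exact_mod_cast hk
    calc ((k:ℝ) + 1) * h ≤ N * h := by gcongr
      _ = T := by rw [hh]; field_simp
  have hl1 : 1 < s * Lstar := by
    have : s * Cstar ≤ s * Lstar := by gcongr
    linarith
  set q := (s * Cstar - 1) / (s * Cstar) with hq
  set A := h * β T / s with hA
  have hA0 : 0 < A := by positivity
  have hc0 : 0 < s * Cstar := by positivity
  have hq0 : 0 < q := div_pos (by linarith) hc0
  have hq1 : q < 1 := by rw [hq, div_lt_one hc0]; linarith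
  have hqc : q * (s * Cstar) = s * Cstar - 1 := by rw [hq]; field_simp
  have hsA : s * A = h * β T := by rw [hA]; field_simp
  refine ⟨fun hyp k hk => ?_, fun M hM hyp k hk => ?_⟩
  · obtain ⟨c1, c2, c3⟩ := hcell k hk
    have h2 := (hyp.trans (min_le_right _ _)).trans (min_le_left _ _)
    rw [le_div_iff₀ (by positivity)] at h2
    have hAq : A * (s * Lstar * (s * Lstar + 1)) ≤ q := by
      rw [hq, le_div_iff₀ hc0]
      refine le_trans (le_of_eq ?_) h2
      linear_combination (Lstar * (s * Lstar + 1) * (s * Cstar)) * hsA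
    obtain ⟨m1, m2, m3⟩ := core s T hs hT β hβc hβpos hβmono Cstar Lstar hC1 hCL _ _ h 0 A q c1 c2 c3
      (by ring) hA hq hAq (by
        intro xa x h1 h2 h3 _
        have hμ : 0 < mcoef s β T ^ 2 := pow_pos (Real.exp_pos _) 2
        have := ptwise1 (s * Lstar) q A x hl1 (by linarith) h3 hq0 hq1 hA0.le hAq
        simpa using this)
    rw [stepE1, ← div_pow]
    exact fin1 _ _ _ 0 (by rw [mul_zero]; linarith) m2
  · obtain ⟨c1, c2, c3⟩ := hcell k hk
    have h3 := ((hyp.trans (min_le_right _ _)).trans (min_le_right _ _)).trans (min_le_left _ _)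
    have h4 := ((hyp.trans (min_le_right _ _)).trans (min_le_right _ _)).trans (min_le_right _ _)
    set μ := mcoef s β T ^ 2 with hμdef
    have hμ : 0 < μ := pow_pos (Real.exp_pos _) 2
    have hμ1 : μ < 1 := by
      have hI : 0 < ∫ t in (0:ℝ)..T, β t :=
        intervalIntegral.intervalIntegral_pos_of_pos_on
          (ContinuousOn.intervalIntegrable (by rwa [uIcc_of_le hT.le]))
          (fun t ht => hβpos t ⟨ht.1.le, ht.2.le⟩) hT
      have : mcoef s β T < 1 := by
        rw [mcoef, Real.exp_lt_one_iff]
        have : 0 < 1 / (2 * s) := by positivity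
        nlinarith
      exact pow_lt_one₀ (Real.exp_pos _).le this (by norm_num)
    have hμ1' : 0 < 1 - μ := by linarith
    have h3' : s * (M * h) * (1 - μ) + A * (s * Lstar) * μ ≤ q * (μ * (1 - μ)) := by
      rw [← mul_div_assoc, le_div_iff₀ (by positivity)] at h3
      refine le_trans (le_of_eq ?_) h3
      linear_combination (Lstar * μ) * hsA
    have h4' : (s * (M * h) + A * (s * Lstar) ^ 2) * (s * Lstar + 1) ≤ q * (s * Lstar) := by
      rw [le_div_iff₀ (by positivity)] at h4
      have e : (s * (M * h) + A * (s * Lstar) ^ 2) * (s * Lstar + 1) * (s * Cstar)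
          ≤ q * (s * Lstar) * (s * Cstar) := by
        have e2 : q * (s * Lstar) * (s * Cstar) = s * ((s * Cstar - 1) * Lstar) := by
          rw [← hqc]; ring
        rw [e2]
        refine le_trans (le_of_eq ?_) (mul_le_mul_of_nonneg_left h4 hs.le)
        linear_combination (s * Lstar ^ 2 * (s * Lstar + 1) * (s * Cstar)) * hsA
      exact le_of_mul_le_mul_right e hc0
    have hK : 0 ≤ s * (M * h) := by positivity
    have hAq := hAq_aux _ A (s * Lstar) q hK hl1 h4'
    have hAl := hAl_aux (s * Cstar) A (s * Lstar) q hC1 (by gcongr) hq hAq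
    obtain ⟨m1, m2, m3⟩ := core s T hs hT β hβc hβpos hβmono Cstar Lstar hC1 hCL _ _ h M A q c1 c2 c3
      (by ring) hA hq hAq (by
        intro xa x i1 i2 i3 i4
        exact ptwise2 (s * Lstar) q A (s * (M * h)) μ xa x hl1 i3 hq0 hq1 hA0 hK hμ hμ1 i1 i2 i4 hAl
          h3' h4')
    rw [stepE2, ← div_pow]
    exact fin2 _ _ _ _ M h hM hh0.le m1 m2 m3
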